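/- arXiv:1506.05349 — 9 statements merged into one kernel-verified Lean document; each statement's English description precedes it below -/
import Mathlib

section
/- Let n be a positive integer and let M be a real 2n×2n matrix in the split orthogonal group O(n,n), i.e. Mᵀ η M = η. If det(M₁₁) > 0 and det(M₂₂) > 0 (that is, M lies in the identity component O⁺⁺(n,n)), then det(I + M) ≥ 0. -/
open Matrix

/-- The metric `η = diag(I_n, -I_n)` as a `2n × 2n` real matrix. -/
noncomputable def splitMetric (n : ℕ) : Matrix (Fin n ⊕ Fin n) (Fin n ⊕ Fin n) ℝ :=
  Matrix.fromBlocks 1 0 0 (-1)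

/-- A real square matrix, not necessarily symmetric, whose quadratic form is positive definite has
positive determinant. -/
theorem Matrix.det_pos_of_dotProduct_mulVec_pos {ι : Type*} [Fintype ι] [DecidableEq ι]
    {N : Matrix ι ι ℝ} (hN : ∀ x, x ≠ 0 → 0 < x ⬝ᵥ N *ᵥ x) : 0 < N.det := by
  let f : ℝ → ℝ := fun t => (t • N + (1 - t) • (1 : Matrix ι ι ℝ)).det
  have hf : Continuous f := by fun_prop
  have hne : ∀ t ∈ Set.Icc (0 : ℝ) 1, f t ≠ 0 := by
    intro t ht h0
    obtain ⟨x, hx, hx0⟩ := Matrix.exists_mulVec_eq_zero_iff.mpr h0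
    have h1 : t * (x ⬝ᵥ N *ᵥ x) + (1 - t) * (x ⬝ᵥ x) = 0 := by
      have h := congrArg (x ⬝ᵥ ·) hx0
      simpa [Matrix.add_mulVec, Matrix.smul_mulVec, dotProduct_add] using h
    have h2 : 0 < x ⬝ᵥ x := by
      simpa using Matrix.dotProduct_star_self_pos_iff.mpr hx
    have h3 := hN x hx
    rcases ht.1.eq_or_lt with rfl | h
    · linarith
    · nlinarith [mul_pos h h3, mul_nonneg (sub_nonneg.mpr ht.2) h2.le]
  have h0 : f 0 = 1 := by simp [f]
  have h1 : f 1 = N.det := by simp [f]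
  by_contra! hle
  obtain ⟨t, ht, ht0⟩ := intermediate_value_Icc' zero_le_one hf.continuousOn
    (show (0 : ℝ) ∈ Set.Icc (f 1) (f 0) from ⟨h1 ▸ hle, h0 ▸ zero_le_one⟩)
  exact hne t ht ht0

/-- If `s` has symmetric part `1 / 2`, then its quadratic form is half the standard one. -/
theorem Matrix.two_mul_dotProduct_mulVec_of_transpose_add_eq_one {ι : Type*} [Fintype ι]
    [DecidableEq ι] {s : Matrix ι ι ℝ} (hs : sᵀ + s = 1) (x : ι → ℝ) :
    2 * (x ⬝ᵥ s *ᵥ x) = x ⬝ᵥ x := by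
  have h : x ⬝ᵥ (sᵀ + s) *ᵥ x = x ⬝ᵥ x := by rw [hs, one_mulVec]
  have h' : x ⬝ᵥ sᵀ *ᵥ x = x ⬝ᵥ s *ᵥ x := by
    rw [mulVec_transpose, dotProduct_comm, dotProduct_mulVec]
  rw [add_mulVec, dotProduct_add, h'] at h
  linarith

theorem Matrix.det_pos_of_transpose_add_eq_one {ι : Type*} [Fintype ι] [DecidableEq ι]
    {s : Matrix ι ι ℝ} (hs : sᵀ + s = 1) : 0 < s.det := by
  refine det_pos_of_dotProduct_mulVec_pos fun x hx => ?_
  have h : 0 < x ⬝ᵥ x := by simpa using Matrix.dotProduct_star_self_pos_iff.mpr hx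
  linarith [two_mul_dotProduct_mulVec_of_transpose_add_eq_one hs x]

theorem Matrix.det_one_sub_schur_pos {ι : Type*} [Fintype ι] [DecidableEq ι]
    {p q s : Matrix ι ι ℝ} (hp : pᵀ + p = 1) (hs : sᵀ + s = 1) :
    0 < (1 - (p - q * s⁻¹ * qᵀ)).det := by
  refine det_pos_of_dotProduct_mulVec_pos fun x hx => ?_
  have hx2 : 0 < x ⬝ᵥ x := by simpa using Matrix.dotProduct_star_self_pos_iff.mpr hx
  have hpx := two_mul_dotProduct_mulVec_of_transpose_add_eq_one hp x
  set y := s⁻¹ *ᵥ (qᵀ *ᵥ x) with hy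
  have hsy : s *ᵥ y = qᵀ *ᵥ x := by
    rw [hy, mulVec_mulVec, mul_nonsing_inv _ (det_pos_of_transpose_add_eq_one hs).ne'.isUnit,
      one_mulVec]
  have hq : x ⬝ᵥ (q * s⁻¹ * qᵀ) *ᵥ x = y ⬝ᵥ s *ᵥ y := by
    rw [← mulVec_mulVec, ← mulVec_mulVec, ← hy, dotProduct_mulVec, ← mulVec_transpose, hsy,
      dotProduct_comm]
  have hy2 : 0 ≤ y ⬝ᵥ y := Finset.sum_nonneg fun i _ => mul_self_nonneg (y i)
  have hsy2 := two_mul_dotProduct_mulVec_of_transpose_add_eq_one hs y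
  rw [sub_mulVec, sub_mulVec, dotProduct_sub, dotProduct_sub, one_mulVec, hq]
  linarith

theorem transpose_inv_one_add_mul_add_eq {ι : Type*} [Fintype ι] [DecidableEq ι]
    {M N η : Matrix ι ι ℝ} (hM : Mᵀ * η * M = η) (hN : (1 + M) * N = 1) :
    Nᵀ * η + η * N = η := by
  have hNt : Nᵀ * (1 + M)ᵀ = 1 := by rw [← transpose_mul, hN, transpose_one]
  have key : (1 + M)ᵀ * η * (1 + M) = η * (1 + M) + (1 + M)ᵀ * η := by
    rw [transpose_add, transpose_one]
    linear_combination (norm := noncomm_ring) hM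
  calc Nᵀ * η + η * N
      = Nᵀ * η * ((1 + M) * N) + (Nᵀ * (1 + M)ᵀ) * η * N := by
        rw [hN, hNt, Matrix.mul_one, Matrix.one_mul]
    _ = Nᵀ * (η * (1 + M) + (1 + M)ᵀ * η) * N := by noncomm_ring
    _ = (Nᵀ * (1 + M)ᵀ) * η * ((1 + M) * N) := by rw [← key]; noncomm_ring
    _ = η := by rw [hN, hNt, Matrix.mul_one, Matrix.one_mul]

theorem det_one_add_nonneg_of_mem_Opp (n : ℕ) (hn : 0 < n)
    (M : Matrix (Fin n ⊕ Fin n) (Fin n ⊕ Fin n) ℝ)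
    (hM : Mᵀ * splitMetric n * M = splitMetric n)
    (h11 : 0 < M.toBlocks₁₁.det) (h22 : 0 < M.toBlocks₂₂.det) :
    0 ≤ (1 + M).det := by
  by_cases hdet : (1 + M).det = 0
  · exact hdet.ge
  obtain ⟨N, hN⟩ : ∃ N, (1 + M) * N = 1 := ⟨_, mul_nonsing_inv _ (Ne.isUnit hdet)⟩
  have hη := transpose_inv_one_add_mul_add_eq hM hN
  obtain ⟨p, q, r, s, rfl⟩ : ∃ p q r s, N = fromBlocks p q r s :=
    ⟨_, _, _, _, (fromBlocks_toBlocks N).symm⟩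
  obtain ⟨A, B, C, D, rfl⟩ : ∃ A B C D, M = fromBlocks A B C D :=
    ⟨_, _, _, _, (fromBlocks_toBlocks M).symm⟩
  simp only [splitMetric, fromBlocks_transpose, fromBlocks_multiply, fromBlocks_add,
    fromBlocks_inj, Matrix.mul_one, Matrix.mul_zero, Matrix.one_mul, Matrix.zero_mul, add_zero,
    zero_add, Matrix.mul_neg, Matrix.neg_mul] at hη
  obtain ⟨hp, hqr, -, hs'⟩ := hη
  have hs : sᵀ + s = 1 := by rw [← neg_inj, ← hs', neg_add]
  have hr : r = qᵀ := by
    rw [← transpose_transpose r]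
    exact congrArg transpose (neg_add_eq_zero.mp hqr)
  subst hr
  have hN' := hN
  rw [← fromBlocks_one, fromBlocks_add, fromBlocks_multiply, fromBlocks_inj] at hN'
  obtain ⟨e11, e12, -, -⟩ := hN'
  rw [zero_add] at e11 e12
  have hsdet := det_pos_of_transpose_add_eq_one hs
  have hss : s * s⁻¹ = 1 := mul_nonsing_inv _ hsdet.ne'.isUnit
  have hB : B = -((1 + A) * q * s⁻¹) := by
    calc B = B * (s * s⁻¹) := by rw [hss, Matrix.mul_one]
      _ = (B * s) * s⁻¹ := by rw [Matrix.mul_assoc]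
      _ = _ := by rw [eq_neg_of_add_eq_zero_right e12, Matrix.neg_mul]
  have hAK : A * (p - q * s⁻¹ * qᵀ) = 1 - (p - q * s⁻¹ * qᵀ) := by
    rw [hB] at e11
    linear_combination (norm := noncomm_ring) e11
  have hKdet : 0 < (p - q * s⁻¹ * qᵀ).det := by
    have h := det_one_sub_schur_pos (q := q) hp hs
    rw [← hAK, det_mul] at h
    exact (pos_iff_pos_of_mul_pos h).mp h11
  have hNdet : 0 < (fromBlocks p q qᵀ s).det := by
    let := s.invertibleOfIsUnitDet hsdet.ne'.isUnit
    rw [det_fromBlocks₂₂, invOf_eq_nonsing_inv]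
    exact mul_pos hsdet hKdet
  have h := congrArg det hN
  rw [det_mul, det_one] at h
  exact ((pos_iff_pos_of_mul_pos (h ▸ zero_lt_one)).mpr hNdet).le
end

section
/- Let n be a positive integer and let M be a real 2n×2n matrix in the split orthogonal group O(n,n), i.e. Mᵀ η M = η. If det(M₁₁) < 0 and det(M₂₂) < 0 (that is, M lies in the component O⁻⁻(n,n)), then det(I + M) ≤ 0. -/
open Matrix

/-- A real square matrix with positive definite symmetric part has positive determinant. -/
theorem det_pos_of_posDef_add_transpose {ι : Type*} [Fintype ι] [DecidableEq ι]
    {X : Matrix ι ι ℝ} (hX : (X + Xᵀ).PosDef) : 0 < X.det := by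
  have det_ne_zero : ∀ Y : Matrix ι ι ℝ, (Y + Yᵀ).PosDef → Y.det ≠ 0 := by
    intro Y hY hdet
    obtain ⟨v, hv, hYv⟩ := Matrix.exists_mulVec_eq_zero_iff.mpr hdet
    have hpos := hY.dotProduct_mulVec_pos hv
    rw [Matrix.add_mulVec, hYv, Matrix.mulVec_transpose, zero_add, star_trivial,
      dotProduct_comm, ← Matrix.dotProduct_mulVec, hYv, dotProduct_zero] at hpos
    exact lt_irrefl _ hpos
  let f : ℝ → ℝ := fun t => ((1 - t) • (1 : Matrix ι ι ℝ) + t • X).det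
  have hf : Continuous f := by
    apply Continuous.matrix_det
    fun_prop
  by_contra! hneg
  have hmem : (0 : ℝ) ∈ Set.Icc (f 1) (f 0) := by
    simpa [f] using hneg
  obtain ⟨t, ⟨ht0, ht1⟩, hft⟩ := intermediate_value_Icc' zero_le_one hf.continuousOn hmem
  refine det_ne_zero _ ?_ hft
  have hsym : (1 - t) • (1 : Matrix ι ι ℝ) + t • X + ((1 - t) • (1 : Matrix ι ι ℝ) + t • X)ᵀ =
      (2 * (1 - t)) • (1 : Matrix ι ι ℝ) + t • (X + Xᵀ) := by
    simp only [transpose_add, transpose_smul, transpose_one]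
    module
  rw [hsym]
  rcases ht0.eq_or_lt with rfl | ht
  · simpa using Matrix.PosDef.one.smul (two_pos : (0 : ℝ) < 2)
  · have hone : ((2 * (1 - t)) • (1 : Matrix ι ι ℝ)).PosSemidef :=
      Matrix.PosSemidef.one.smul (by linarith)
    exact Matrix.PosDef.posSemidef_add hone (hX.smul ht)

/-- If `N` is a right inverse of `1 + M` with `M` preserving the bilinear form `η`, then
`η * N + Nᵀ * η = η`. -/
theorem mul_add_transpose_mul_of_one_add_mul_eq_one {ι : Type*} [Fintype ι] [DecidableEq ι]
    {η M N : Matrix ι ι ℝ} (hM : Mᵀ * η * M = η) (hN : (1 + M) * N = 1) :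
    η * N + Nᵀ * η = η := by
  have hNt : Nᵀ * (1 + Mᵀ) = 1 := by
    simpa using congrArg Matrix.transpose hN
  have hform : (1 + Mᵀ) * η + η * (1 + M) = (1 + Mᵀ) * η * (1 + M) := by
    calc (1 + Mᵀ) * η + η * (1 + M) = η + η * M + Mᵀ * η + η := by noncomm_ring
      _ = η + η * M + Mᵀ * η + Mᵀ * η * M := by rw [hM]
      _ = (1 + Mᵀ) * η * (1 + M) := by noncomm_ring
  calc η * N + Nᵀ * η = Nᵀ * (1 + Mᵀ) * η * N + Nᵀ * η * ((1 + M) * N) := by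
        rw [hNt, hN, one_mul, mul_one]
    _ = Nᵀ * ((1 + Mᵀ) * η + η * (1 + M)) * N := by noncomm_ring
    _ = (Nᵀ * (1 + Mᵀ)) * η * ((1 + M) * N) := by rw [hform]; noncomm_ring
    _ = η := by rw [hNt, hN, one_mul, mul_one]

/-- For `M` in `O(n,n)` with `1 + M` invertible, `det (1 + M)` has the sign of `det M₁₁`. -/
theorem det_toBlocks₁₁_mul_det_pos_of_one_add_mul_eq_one {n : ℕ}
    {M N : Matrix (Fin n ⊕ Fin n) (Fin n ⊕ Fin n) ℝ}
    (hM : Mᵀ * splitMetric n * M = splitMetric n) (hN : (1 + M) * N = 1) :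
    0 < M.toBlocks₁₁.det * N.det := by
  have hη := mul_add_transpose_mul_of_one_add_mul_eq_one hM hN
  have hMN : M * N = 1 - N := by
    rw [← hN]; noncomm_ring
  obtain ⟨A, B, C, D, rfl⟩ : ∃ A B C D, M = fromBlocks A B C D :=
    ⟨_, _, _, _, (fromBlocks_toBlocks M).symm⟩
  obtain ⟨P, Q, R, S, rfl⟩ : ∃ P Q R S, N = fromBlocks P Q R S :=
    ⟨_, _, _, _, (fromBlocks_toBlocks N).symm⟩
  rw [toBlocks_fromBlocks₁₁]
  rw [← fromBlocks_one, sub_eq_add_neg, fromBlocks_neg, fromBlocks_add, fromBlocks_multiply, fromBlocks_inj] at hMN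
  obtain ⟨hAP, hAQ, -, -⟩ := hMN
  simp only [splitMetric, fromBlocks_transpose, fromBlocks_multiply, fromBlocks_add,
    fromBlocks_inj, one_mul, mul_one, zero_mul, mul_zero, add_zero, zero_add, neg_mul,
    mul_neg] at hη
  obtain ⟨hP, hQ, -, hS⟩ := hη
  have hR : R = Qᵀ := by
    rw [add_neg_eq_zero.mp hQ, transpose_transpose]
  subst hR
  have hS : S + Sᵀ = 1 := by
    rw [← neg_inj, neg_add, hS]
  have hSdet : 0 < S.det := det_pos_of_posDef_add_transpose (hS ▸ PosDef.one)
  have hSunit : IsUnit S.det := hSdet.ne'.isUnit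
  let : Invertible S := S.invertibleOfIsUnitDet hSunit
  have hSt : Sᵀ * S⁻¹ᵀ = 1 := by
    rw [← transpose_mul, nonsing_inv_mul S hSunit, transpose_one]
  have hSinv : S⁻¹ + S⁻¹ᵀ = S⁻¹ * S⁻¹ᵀ := by
    calc S⁻¹ + S⁻¹ᵀ = S⁻¹ * (Sᵀ * S⁻¹ᵀ) + S⁻¹ * S * S⁻¹ᵀ := by
          rw [hSt, nonsing_inv_mul S hSunit, mul_one, one_mul]
      _ = S⁻¹ * (S + Sᵀ) * S⁻¹ᵀ := by noncomm_ring
      _ = S⁻¹ * S⁻¹ᵀ := by rw [hS, mul_one]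
  set T := P - Q * S⁻¹ * Qᵀ with hT
  have hB : B = (-Q - A * Q) * S⁻¹ := by
    calc B = B * S * S⁻¹ := (mul_nonsing_inv_cancel_right S B hSunit).symm
      _ = (-Q - A * Q) * S⁻¹ := by
        congr 1
        rw [eq_sub_iff_add_eq', hAQ, zero_add]
  have hAT : A * T = 1 - T := by
    calc A * T = (A * P + (-Q - A * Q) * S⁻¹ * Qᵀ) + Q * S⁻¹ * Qᵀ := by
          rw [hT]; noncomm_ring
      _ = 1 - T := by rw [← hB, hAP, hT]; abel
  have hsym : (1 - T) + (1 - T)ᵀ = 1 + (Q * S⁻¹) * (Q * S⁻¹)ᴴ := by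
    calc (1 - T) + (1 - T)ᵀ = 1 + 1 - (P + Pᵀ) + Q * (S⁻¹ + S⁻¹ᵀ) * Qᵀ := by
          simp only [hT, transpose_sub, transpose_one, transpose_mul, transpose_transpose]
          noncomm_ring
      _ = 1 + (Q * S⁻¹) * (Q * S⁻¹)ᴴ := by
          rw [hP, hSinv, conjTranspose_eq_transpose_of_trivial, transpose_mul]
          noncomm_ring
  have hdet : 0 < (A * T).det := by
    rw [hAT]
    apply det_pos_of_posDef_add_transpose
    rw [hsym]
    exact PosDef.one.add_posSemidef (posSemidef_self_mul_conjTranspose _)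
  rw [det_fromBlocks₂₂, invOf_eq_nonsing_inv, ← hT, mul_left_comm, ← det_mul]
  exact mul_pos hSdet hdet

theorem det_one_add_nonpos_of_mem_Omm (n : ℕ) (hn : 0 < n)
    (M : Matrix (Fin n ⊕ Fin n) (Fin n ⊕ Fin n) ℝ)
    (hM : Mᵀ * splitMetric n * M = splitMetric n)
    (h11 : M.toBlocks₁₁.det < 0) (h22 : M.toBlocks₂₂.det < 0) :
    (1 + M).det ≤ 0 := by
  by_contra! hpos
  have hN := mul_nonsing_inv (1 + M) hpos.ne'.isUnit
  have hsign := det_toBlocks₁₁_mul_det_pos_of_one_add_mul_eq_one hM hN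
  have hdet : 0 < (1 + M)⁻¹.det := by
    rw [det_nonsing_inv, Ring.inverse_eq_inv']
    exact inv_pos.mpr hpos
  exact absurd hsign (mul_neg_of_neg_of_pos h11 hdet).not_gt
end

section
/- Let n be a positive integer and let M be a real 2n×2n matrix in the split orthogonal group O(n,n), i.e. Mᵀ η M = η. If det(M₁₁) · det(M₂₂) < 0 (that is, M lies in one of the two mixed components O⁺⁻(n,n) or O⁻⁺(n,n)), then det(I + M) = 0. -/
open Matrix

theorem splitMetric_mul_self (n : ℕ) : splitMetric n * splitMetric n = 1 := by
  simp [splitMetric, fromBlocks_multiply, fromBlocks_one]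

theorem det_mul_det_toBlocks₂₂ (n : ℕ) (M : Matrix (Fin n ⊕ Fin n) (Fin n ⊕ Fin n) ℝ)
    (hM : Mᵀ * splitMetric n * M = splitMetric n) :
    M.det * M.toBlocks₂₂.det = M.toBlocks₁₁.det := by
  have hinv : M * (splitMetric n * Mᵀ * splitMetric n) = 1 := by
    rw [mul_eq_one_comm, mul_assoc, mul_assoc, ← mul_assoc Mᵀ, hM, splitMetric_mul_self]
  obtain ⟨A, B, C, D, rfl⟩ : ∃ A B C D, M = fromBlocks A B C D :=
    ⟨_, _, _, _, (fromBlocks_toBlocks M).symm⟩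
  simp only [splitMetric, fromBlocks_transpose, fromBlocks_multiply, ← fromBlocks_one,
    fromBlocks_inj] at hinv
  have hprod : fromBlocks A B C D * fromBlocks 1 (-Cᵀ) 0 Dᵀ = fromBlocks A 0 C 1 := by
    rw [fromBlocks_multiply, fromBlocks_inj]
    exact ⟨by simp, by simpa using hinv.2.1, by simp, by simpa using hinv.2.2.2⟩
  simpa using congrArg det hprod

theorem det_one_add_eq_zero_of_mixed (n : ℕ) (hn : 0 < n)
    (M : Matrix (Fin n ⊕ Fin n) (Fin n ⊕ Fin n) ℝ)
    (hM : Mᵀ * splitMetric n * M = splitMetric n)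
    (hmixed : M.toBlocks₁₁.det * M.toBlocks₂₂.det < 0) :
    (1 + M).det = 0 := by
  have hneg : M.det < 0 := by
    rw [← det_mul_det_toBlocks₂₂ n M hM] at hmixed
    nlinarith [mul_self_nonneg M.toBlocks₂₂.det]
  have hη : (splitMetric n).det ≠ 0 := fun h => by
    simpa [h] using congrArg det (splitMetric_mul_self n)
  have hcomm : Mᵀ * splitMetric n * (1 + M) = (1 + M)ᵀ * splitMetric n := by
    rw [mul_add, hM, transpose_add, transpose_one, add_mul, mul_one, one_mul, add_comm]
  have hdet := congrArg det hcomm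
  simp only [det_mul, det_transpose] at hdet
  have hzero : (M.det - 1) * (splitMetric n).det * (1 + M).det = 0 := by linear_combination hdet
  exact (mul_eq_zero.mp hzero).resolve_left (mul_ne_zero (by linarith) hη)
end

section
/- Let n be a positive integer and let M be a real 2n×2n matrix in the split orthogonal group O(n,n), i.e. Mᵀ η M = η. Then |det(M₁₁)| ≥ 1 and |det(M₂₂)| ≥ 1; in particular both block determinants are nonzero. -/
open Matrix

theorem Matrix.PosSemidef.one_le_det_one_add {m : Type*} [Fintype m] [DecidableEq m]
    {P : Matrix m m ℝ} (hP : P.PosSemidef) : 1 ≤ (1 + P).det := by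
  have h : (1 + P).det = ∏ i, (1 + hP.1.eigenvalues i) := by
    have hneg : 1 + P = -(scalar m (-1) - P) := by
      rw [map_neg, map_one]
      abel
    rw [hneg, det_neg, ← eval_charpoly, hP.1.charpoly_eq, Polynomial.eval_prod,
      ← Finset.card_univ, ← Finset.prod_const, ← Finset.prod_mul_distrib]
    refine Finset.prod_congr rfl fun i _ => ?_
    rw [Polynomial.eval_sub, Polynomial.eval_X, Polynomial.eval_C, RCLike.ofReal_real_eq_id, id]
    ring
  rw [h]
  exact Finset.one_le_prod fun i _ => by linarith [hP.eigenvalues_nonneg i]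

theorem Matrix.one_le_abs_det_of_transpose_mul_self {m k : Type*} [Fintype m] [DecidableEq m]
    [Fintype k] {A : Matrix m m ℝ} {C : Matrix k m ℝ} (h : Aᵀ * A = 1 + Cᵀ * C) :
    1 ≤ |A.det| := by
  have hP : (Cᵀ * C).PosSemidef := posSemidef_conjTranspose_mul_self C
  rw [← one_le_sq_iff_one_le_abs]
  calc (1 : ℝ) ≤ (1 + Cᵀ * C).det := hP.one_le_det_one_add
    _ = A.det ^ 2 := by rw [← h, det_mul, det_transpose, sq]

theorem one_le_abs_det_blocks (n : ℕ) (hn : 0 < n)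
    (M : Matrix (Fin n ⊕ Fin n) (Fin n ⊕ Fin n) ℝ)
    (hM : Mᵀ * splitMetric n * M = splitMetric n) :
    1 ≤ |M.toBlocks₁₁.det| ∧ 1 ≤ |M.toBlocks₂₂.det| := by
  rw [← fromBlocks_toBlocks M, splitMetric, fromBlocks_transpose, fromBlocks_multiply,
    fromBlocks_multiply, fromBlocks_inj] at hM
  obtain ⟨h₁, -, -, h₂⟩ := hM
  simp only [Matrix.mul_one, Matrix.mul_zero, Matrix.mul_neg, Matrix.neg_mul, add_zero,
    zero_add] at h₁ h₂
  refine ⟨one_le_abs_det_of_transpose_mul_self (C := M.toBlocks₂₁) ?_,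
    one_le_abs_det_of_transpose_mul_self (C := M.toBlocks₁₂) ?_⟩
  · rw [← h₁]
    abel
  · rw [← neg_eq_iff_eq_neg.mpr h₂]
    abel
end

section
/- Let n be a positive integer and let M and N be real 2n×2n matrices in the split orthogonal group O(n,n) with det(M₁₁) > 0, det(M₂₂) > 0, det(N₁₁) > 0 and det(N₂₂) > 0. Then the product MN also satisfies det((MN)₁₁) > 0 and det((MN)₂₂) > 0; that is, the component O⁺⁺(n,n) is closed under matrix multiplication. -/
open Matrix

/-- A matrix preserving `diag(I, -I)` preserves the form `x ⬝ᵥ x - y ⬝ᵥ y`. -/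
theorem splitMetric_quadratic_eq {n : ℕ} {M : Matrix (Fin n ⊕ Fin n) (Fin n ⊕ Fin n) ℝ}
    (hM : Mᵀ * splitMetric n * M = splitMetric n) (x y : Fin n → ℝ) :
    (M.toBlocks₁₁ *ᵥ x + M.toBlocks₁₂ *ᵥ y) ⬝ᵥ (M.toBlocks₁₁ *ᵥ x + M.toBlocks₁₂ *ᵥ y)
      - (M.toBlocks₂₁ *ᵥ x + M.toBlocks₂₂ *ᵥ y) ⬝ᵥ (M.toBlocks₂₁ *ᵥ x + M.toBlocks₂₂ *ᵥ y)
      = x ⬝ᵥ x - y ⬝ᵥ y := by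
  have form_elim (u v : Fin n → ℝ) :
      Sum.elim u v ⬝ᵥ splitMetric n *ᵥ Sum.elim u v = u ⬝ᵥ u - v ⬝ᵥ v := by
    simp [splitMetric, fromBlocks_mulVec, neg_mulVec, sub_eq_add_neg]
  have mulVec_elim : M *ᵥ Sum.elim x y = Sum.elim (M.toBlocks₁₁ *ᵥ x + M.toBlocks₁₂ *ᵥ y)
      (M.toBlocks₂₁ *ᵥ x + M.toBlocks₂₂ *ᵥ y) := by
    conv_lhs => rw [← fromBlocks_toBlocks M]
    simp [fromBlocks_mulVec]
  rw [← form_elim, ← form_elim, ← mulVec_elim]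
  conv_rhs => rw [← hM, ← mulVec_mulVec, ← mulVec_mulVec, dotProduct_mulVec, vecMul_transpose]

/-- If `[A B; C D]` preserves `x ⬝ᵥ x - y ⬝ᵥ y` and the columns `[P; Q]` satisfy
`Pᵀ P - Qᵀ Q = 1`, then `A P + B Q` has positive determinant as soon as `A` and `P` do. -/
theorem det_mul_add_mul_pos {m k : Type*} [Fintype m] [DecidableEq m] [Fintype k]
    {A P : Matrix m m ℝ} {B : Matrix m k ℝ} {C Q : Matrix k m ℝ} {D : Matrix k k ℝ}
    (h : ∀ x y, (A *ᵥ x + B *ᵥ y) ⬝ᵥ (A *ᵥ x + B *ᵥ y)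
      - (C *ᵥ x + D *ᵥ y) ⬝ᵥ (C *ᵥ x + D *ᵥ y) = x ⬝ᵥ x - y ⬝ᵥ y)
    (hPQ : ∀ x, (P *ᵥ x) ⬝ᵥ (P *ᵥ x) - (Q *ᵥ x) ⬝ᵥ (Q *ᵥ x) = x ⬝ᵥ x)
    (hA : 0 < A.det) (hP : 0 < P.det) : 0 < (A * P + B * Q).det := by
  have det_ne_zero (t : ℝ) (ht : t ∈ Set.Icc (0 : ℝ) 1) :
      (A * P + t • (B * Q)).det ≠ 0 := by
    intro hdet
    obtain ⟨v, hv, hv0⟩ := exists_mulVec_eq_zero_iff.mpr hdet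
    have hker : A *ᵥ (P *ᵥ v) + B *ᵥ (t • (Q *ᵥ v)) = 0 := by
      simpa [add_mulVec, smul_mulVec, mulVec_smul] using hv0
    have hq := h (P *ᵥ v) (t • (Q *ᵥ v))
    rw [hker] at hq
    simp only [dotProduct_zero, smul_dotProduct, dotProduct_smul, smul_eq_mul] at hq
    have hv_pos : 0 < v ⬝ᵥ v := by simpa using dotProduct_star_self_pos_iff.mpr hv
    have self_nonneg (w : k → ℝ) : 0 ≤ w ⬝ᵥ w := by simpa using dotProduct_star_self_nonneg w
    have ht2 : 0 ≤ 1 - t * t := by nlinarith [ht.1, ht.2]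
    nlinarith [self_nonneg (C *ᵥ (P *ᵥ v) + D *ᵥ (t • (Q *ᵥ v))), hPQ v,
      mul_nonneg ht2 (self_nonneg (Q *ᵥ v))]
  have hcont : Continuous fun t : ℝ => (A * P + t • (B * Q)).det := by fun_prop
  by_contra! hle
  obtain ⟨t, ht, ht0⟩ := intermediate_value_Icc' zero_le_one hcont.continuousOn
    (show (0 : ℝ) ∈ Set.Icc _ _ from
      ⟨by simpa using hle, by simpa using (mul_pos hA hP).le⟩)
  exact det_ne_zero t ht ht0

theorem Opp_mul_closed (n : ℕ) (hn : 0 < n)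
    (M N : Matrix (Fin n ⊕ Fin n) (Fin n ⊕ Fin n) ℝ)
    (hM : Mᵀ * splitMetric n * M = splitMetric n)
    (hN : Nᵀ * splitMetric n * N = splitMetric n)
    (hM11 : 0 < M.toBlocks₁₁.det) (hM22 : 0 < M.toBlocks₂₂.det)
    (hN11 : 0 < N.toBlocks₁₁.det) (hN22 : 0 < N.toBlocks₂₂.det) :
    0 < (M * N).toBlocks₁₁.det ∧ 0 < (M * N).toBlocks₂₂.det := by
  have hmul := fromBlocks_multiply M.toBlocks₁₁ M.toBlocks₁₂ M.toBlocks₂₁ M.toBlocks₂₂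
    N.toBlocks₁₁ N.toBlocks₁₂ N.toBlocks₂₁ N.toBlocks₂₂
  rw [fromBlocks_toBlocks, fromBlocks_toBlocks] at hmul
  have hqM := splitMetric_quadratic_eq hM
  have hqN := splitMetric_quadratic_eq hN
  rw [hmul, toBlocks_fromBlocks₁₁, toBlocks_fromBlocks₂₂]
  constructor
  · exact det_mul_add_mul_pos hqM (fun x => by simpa using hqN x 0) hM11 hN11
  · rw [add_comm]
    refine det_mul_add_mul_pos (C := M.toBlocks₁₂) (D := M.toBlocks₁₁) (fun x y => ?_)
      (fun x => ?_) hM22 hN22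
    · rw [add_comm (M.toBlocks₂₂ *ᵥ x), add_comm (M.toBlocks₁₂ *ᵥ x)]
      linarith [hqM y x]
    · have hq := hqN 0 x
      simp only [mulVec_zero, zero_add, dotProduct_zero] at hq
      linarith
end

section
/- Let n be a positive integer and let M and N be real 2n×2n matrices in the split orthogonal group O(n,n). Then the sign of det((MN)₁₁) equals the product of the signs of det(M₁₁) and det(N₁₁), and the sign of det((MN)₂₂) equals the product of the signs of det(M₂₂) and det(N₂₂); equivalently, det((MN)₁₁) · det(M₁₁) · det(N₁₁) > 0 and det((MN)₂₂) · det(M₂₂) · det(N₂₂) > 0. -/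
open Matrix

theorem dotProduct_self_nonneg_real {n : Type*} [Fintype n] (v : n → ℝ) : 0 ≤ v ⬝ᵥ v :=
  Finset.sum_nonneg fun i _ => mul_self_nonneg (v i)

/-- An element of `O(n,n)`, written in blocks, preserves the quadratic form `|u|² - |w|²`. -/
theorem splitMetric_quadratic_form {n : ℕ} {M : Matrix (Fin n ⊕ Fin n) (Fin n ⊕ Fin n) ℝ}
    (hM : Mᵀ * splitMetric n * M = splitMetric n) (u w : Fin n → ℝ) :
    (M.toBlocks₁₁ *ᵥ u + M.toBlocks₁₂ *ᵥ w) ⬝ᵥ (M.toBlocks₁₁ *ᵥ u + M.toBlocks₁₂ *ᵥ w) -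
      (M.toBlocks₂₁ *ᵥ u + M.toBlocks₂₂ *ᵥ w) ⬝ᵥ (M.toBlocks₂₁ *ᵥ u + M.toBlocks₂₂ *ᵥ w) =
      u ⬝ᵥ u - w ⬝ᵥ w := by
  have metric_form (a b : Fin n → ℝ) :
      Sum.elim a b ⬝ᵥ (splitMetric n *ᵥ Sum.elim a b) = a ⬝ᵥ a - b ⬝ᵥ b := by
    simp [splitMetric, fromBlocks_mulVec, Function.comp_def, neg_mulVec, sub_eq_add_neg]
  have mulVec_elim : M *ᵥ Sum.elim u w =
      Sum.elim (M.toBlocks₁₁ *ᵥ u + M.toBlocks₁₂ *ᵥ w)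
        (M.toBlocks₂₁ *ᵥ u + M.toBlocks₂₂ *ᵥ w) := by
    conv_lhs => rw [← fromBlocks_toBlocks M, fromBlocks_mulVec]
    simp [Function.comp_def]
  rw [← metric_form, ← metric_form, ← mulVec_elim]
  conv_rhs => rw [← hM]
  rw [← mulVec_mulVec, ← mulVec_mulVec, dotProduct_mulVec _ Mᵀ, vecMul_transpose]

/-- If `[A B]` only annihilates vectors with `|w| ≤ |u|` and `[E; G]` only produces vectors with
`|G v| < |E v|`, then `A * E + t • B * G` is nonsingular for `t ∈ [0, 1]`, so that its determinant
keeps the same sign along this segment. -/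
theorem det_mul_add_mul_pos_s8 {n : Type*} [Fintype n] [DecidableEq n] {A B E G : Matrix n n ℝ}
    (hAB : ∀ w u : n → ℝ, A *ᵥ w + B *ᵥ u = 0 → w ⬝ᵥ w ≤ u ⬝ᵥ u)
    (hEG : ∀ v : n → ℝ, v ≠ 0 → (G *ᵥ v) ⬝ᵥ (G *ᵥ v) < (E *ᵥ v) ⬝ᵥ (E *ᵥ v)) :
    0 < (A * E + B * G).det * A.det * E.det := by
  let f : ℝ → ℝ := fun t => (A * E + t • (B * G)).det
  have hf : Continuous f := by
    unfold f
    fun_prop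
  have hf_ne : ∀ t ∈ Set.Icc (0 : ℝ) 1, f t ≠ 0 := by
    rintro t ⟨ht0, ht1⟩ hdet
    obtain ⟨v, hv, hker⟩ := exists_mulVec_eq_zero_iff.mpr hdet
    have hle := hAB (E *ᵥ v) (t • G *ᵥ v) (by
      simpa [add_mulVec, smul_mulVec, mulVec_smul, mulVec_mulVec] using hker)
    have hlt := hEG v hv
    have hG : 0 ≤ (G *ᵥ v) ⬝ᵥ (G *ᵥ v) := dotProduct_self_nonneg_real _
    rw [smul_dotProduct, dotProduct_smul, smul_eq_mul, smul_eq_mul] at hle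
    nlinarith [mul_nonneg (sub_nonneg.mpr ht1) hG,
      mul_nonneg ht0 (mul_nonneg (sub_nonneg.mpr ht1) hG)]
  have hf_pos : 0 < f 1 * f 0 := by
    by_contra! hle
    have hzero : (0 : ℝ) ∈ Set.uIcc (f 0) (f 1) := by
      rw [Set.mem_uIcc]
      rcases mul_nonpos_iff.mp hle with h | h
      · exact Or.inl ⟨h.2, h.1⟩
      · exact Or.inr h
    obtain ⟨t, ht, hft⟩ := intermediate_value_uIcc hf.continuousOn hzero
    rw [Set.uIcc_of_le zero_le_one] at ht
    exact hf_ne t ht hft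
  simpa [f, det_mul, mul_assoc] using hf_pos

theorem sign_det_blocks_mul (n : ℕ) (hn : 0 < n)
    (M N : Matrix (Fin n ⊕ Fin n) (Fin n ⊕ Fin n) ℝ)
    (hM : Mᵀ * splitMetric n * M = splitMetric n)
    (hN : Nᵀ * splitMetric n * N = splitMetric n) :
    0 < (M * N).toBlocks₁₁.det * M.toBlocks₁₁.det * N.toBlocks₁₁.det ∧
      0 < (M * N).toBlocks₂₂.det * M.toBlocks₂₂.det * N.toBlocks₂₂.det := by
  have hmul : M * N = fromBlocks
      (M.toBlocks₁₁ * N.toBlocks₁₁ + M.toBlocks₁₂ * N.toBlocks₂₁)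
      (M.toBlocks₁₁ * N.toBlocks₁₂ + M.toBlocks₁₂ * N.toBlocks₂₂)
      (M.toBlocks₂₁ * N.toBlocks₁₁ + M.toBlocks₂₂ * N.toBlocks₂₁)
      (M.toBlocks₂₁ * N.toBlocks₁₂ + M.toBlocks₂₂ * N.toBlocks₂₂) := by
    rw [← fromBlocks_multiply, fromBlocks_toBlocks, fromBlocks_toBlocks]
  have self_pos (v : Fin n → ℝ) (hv : v ≠ 0) : 0 < v ⬝ᵥ v :=
    (dotProduct_self_nonneg_real v).lt_of_ne' (dotProduct_self_eq_zero.not.mpr hv)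
  rw [hmul, toBlocks_fromBlocks₁₁, toBlocks_fromBlocks₂₂]
  constructor
  · refine det_mul_add_mul_pos_s8 (fun w u h => ?_) (fun v hv => ?_)
    · have hform := splitMetric_quadratic_form hM w u
      rw [h, zero_dotProduct] at hform
      linarith [dotProduct_self_nonneg_real (M.toBlocks₂₁ *ᵥ w + M.toBlocks₂₂ *ᵥ u)]
    · have hform := splitMetric_quadratic_form hN v 0
      simp only [mulVec_zero, add_zero, zero_dotProduct, sub_zero] at hform
      linarith [self_pos v hv]
  · rw [add_comm]
    refine det_mul_add_mul_pos_s8 (fun w u h => ?_) (fun v hv => ?_)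
    · have hform := splitMetric_quadratic_form hM u w
      rw [add_comm] at h
      rw [h, zero_dotProduct] at hform
      linarith [dotProduct_self_nonneg_real (M.toBlocks₁₁ *ᵥ u + M.toBlocks₁₂ *ᵥ w)]
    · have hform := splitMetric_quadratic_form hN 0 v
      simp only [mulVec_zero, zero_add, zero_dotProduct, zero_sub] at hform
      linarith [self_pos v hv]
end

section
/- Let n be a positive integer and let M be a real 2n×2n matrix in the split orthogonal group O(n,n). Then det(M) · det(M₁₁) · det(M₂₂) > 0; that is, det(M) = +1 on the components O⁺⁺(n,n) and O⁻⁻(n,n), and det(M) = −1 on the two mixed components. -/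
open Matrix

theorem det_mul_det_blocks_pos (n : ℕ) (hn : 0 < n)
    (M : Matrix (Fin n ⊕ Fin n) (Fin n ⊕ Fin n) ℝ)
    (hM : Mᵀ * splitMetric n * M = splitMetric n) :
    0 < M.det * M.toBlocks₁₁.det * M.toBlocks₂₂.det := by
  obtain ⟨A, B, C, D, rfl⟩ : ∃ A B C D, M = fromBlocks A B C D :=
    ⟨_, _, _, _, (fromBlocks_toBlocks M).symm⟩
  simp only [splitMetric, fromBlocks_transpose, fromBlocks_multiply, fromBlocks_inj, mul_one,
    mul_zero, add_zero, zero_sub, mul_neg, neg_mul, ← sub_eq_add_neg] at hM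
  obtain ⟨hAC, -, hBD, hDD⟩ := hM
  rw [toBlocks_fromBlocks₁₁, toBlocks_fromBlocks₂₂]
  have hA : A.det ≠ 0 := by
    have hpos : (Aᵀ * A).PosDef := by
      rw [sub_eq_iff_eq_add.mp hAC]
      exact PosDef.one.add_posSemidef (by simpa using posSemidef_conjTranspose_mul_self C)
    intro h
    simpa [h] using hpos.det_pos
  let _ : Invertible A := invertibleOfIsUnitDet A hA.isUnit
  -- The Schur complement of `A` is the inverse of `Dᵀ`.
  have hSchur : Dᵀ * (D - C * ⅟A * B) = 1 := by
    rw [mul_sub, ← mul_assoc, ← mul_assoc, ← sub_eq_zero.mp hBD, mul_invOf_cancel_right,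
      ← neg_sub, hDD, neg_neg]
  have hdet : D.det * (D - C * ⅟A * B).det = 1 := by
    simpa using congrArg det hSchur
  rw [det_fromBlocks₁₁]
  calc 0 < A.det ^ 2 := by positivity
    _ = A.det * (D - C * ⅟A * B).det * A.det * D.det := by
      linear_combination (-A.det ^ 2) * hdet
end

section
/- Let n be a positive integer, let i be an index in the first half and j an index in the second half of the index set Fin n ⊕ Fin n, and let D be the 2n×2n real diagonal matrix equal to the identity except that its (i,i) and (j,j) entries are −1. Then D lies in the split orthogonal group O(n,n) (Dᵀ η D = η), and det(D₁₁) = −1 and det(D₂₂) = −1, i.e. D lies in the component O⁻⁻(n,n). -/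
open Matrix

/-- The diagonal reflection that flips the sign of a single coordinate has determinant `-1`. -/
theorem det_diagonal_ite_eq_neg_one {ι : Type*} [Fintype ι] [DecidableEq ι] (k : ι) :
    (Matrix.diagonal fun x : ι => if x = k then (-1 : ℝ) else 1).det = -1 := by
  rw [Matrix.det_diagonal, Finset.prod_ite_eq' Finset.univ k fun _ => (-1 : ℝ),
    if_pos (Finset.mem_univ k)]

theorem splitMetric_eq_diagonal (n : ℕ) :
    splitMetric n = Matrix.diagonal (Sum.elim (fun _ => 1) fun _ => -1) := by
  rw [splitMetric, ← Matrix.fromBlocks_diagonal, Matrix.diagonal_one, ← Matrix.diagonal_neg,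
    Matrix.diagonal_one]

theorem vertex_matrix_mem_Omm (n : ℕ) (hn : 0 < n) (i j : Fin n)
    (D : Matrix (Fin n ⊕ Fin n) (Fin n ⊕ Fin n) ℝ)
    (hD : D = Matrix.diagonal fun x =>
      if x = Sum.inl i ∨ x = Sum.inr j then (-1 : ℝ) else 1) :
    Dᵀ * splitMetric n * D = splitMetric n ∧
      D.toBlocks₁₁.det = -1 ∧ D.toBlocks₂₂.det = -1 := by
  subst hD
  refine ⟨?_, ?_, ?_⟩
  · rw [splitMetric_eq_diagonal, Matrix.diagonal_transpose, Matrix.diagonal_mul_diagonal,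
      Matrix.diagonal_mul_diagonal]
    congr 1
    funext x
    split_ifs <;> ring
  · rw [← det_diagonal_ite_eq_neg_one i]
    congr 1
    ext a b
    simp [Matrix.toBlocks₁₁, Matrix.diagonal_apply]
  · rw [← det_diagonal_ite_eq_neg_one j]
    congr 1
    ext a b
    simp [Matrix.toBlocks₂₂, Matrix.diagonal_apply]
end

section
/- Let n be a positive integer and let M and N be real 2n×2n matrices in the split orthogonal group O(n,n) that lie in the same component with definite block-determinant signs: either both satisfy det(M₁₁), det(M₂₂), det(N₁₁), det(N₂₂) > 0, or both satisfy det(M₁₁), det(M₂₂), det(N₁₁), det(N₂₂) < 0. Then det(I + M) · det(I + N) ≥ 0; that is, the two determinants have the same sign (or one of them vanishes). -/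
open Matrix

/-- If `P` and `Q` have the same Gram matrix, then `det (P + Q)` does not have the sign opposite
to that of `det P`. -/
theorem det_add_mul_det_nonneg_of_gram_eq {ι : Type*} [Fintype ι] [DecidableEq ι]
    {P Q : Matrix ι ι ℝ} (h : Qᵀ * Q = Pᵀ * P) : 0 ≤ (P + Q).det * P.det := by
  by_cases hP : P.det = 0
  · simp [hP]
  have gram_dot : ∀ (R : Matrix ι ι ℝ) (v : ι → ℝ), R *ᵥ v ⬝ᵥ R *ᵥ v = v ⬝ᵥ (Rᵀ * R) *ᵥ v := by
    intro R v
    rw [← mulVec_mulVec, dotProduct_mulVec v, vecMul_transpose]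
  have det_ne : ∀ t ∈ Set.Ico (0 : ℝ) 1, (P + t • Q).det ≠ 0 := by
    rintro t ⟨ht0, ht1⟩ hdet
    obtain ⟨v, hv, hPQ⟩ := exists_mulVec_eq_zero_iff.mpr hdet
    rw [add_mulVec, smul_mulVec] at hPQ
    have hnorm : P *ᵥ v ⬝ᵥ P *ᵥ v = t * t * (P *ᵥ v ⬝ᵥ P *ᵥ v) := by
      conv_lhs => rw [eq_neg_of_add_eq_zero_left hPQ]
      rw [gram_dot P, ← h, ← gram_dot Q]
      simp [mul_assoc]
    have hzero : P *ᵥ v ⬝ᵥ P *ᵥ v = 0 := by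
      have : (1 - t * t) * (P *ᵥ v ⬝ᵥ P *ᵥ v) = 0 := by linarith
      exact (mul_eq_zero.mp this).resolve_left (by nlinarith)
    exact hP (exists_mulVec_eq_zero_iff.mp ⟨v, hv, dotProduct_self_eq_zero.mp hzero⟩)
  let f : ℝ → ℝ := fun t => (P + t • Q).det * P.det
  have hf : Continuous f := by fun_prop
  by_contra! hneg
  obtain ⟨t, ht, hft⟩ : (0 : ℝ) ∈ f '' Set.Icc 0 1 := by
    refine intermediate_value_Icc' zero_le_one hf.continuousOn ⟨?_, ?_⟩
    · simpa [f] using hneg.le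
    · simpa [f] using mul_self_nonneg P.det
  have ht1 : t ≠ 1 := by
    rintro rfl
    exact hneg.ne (by simpa [f] using hft)
  exact mul_ne_zero (det_ne t ⟨ht.1, lt_of_le_of_ne ht.2 ht1⟩) hP hft

/-- For `M` in the split orthogonal group, `det (1 + M)` does not have the sign opposite to that of
the determinant of the lower right block of `M`. -/
theorem det_one_add_mul_det_toBlocks₂₂_nonneg {n : ℕ}
    {M : Matrix (Fin n ⊕ Fin n) (Fin n ⊕ Fin n) ℝ}
    (hM : Mᵀ * splitMetric n * M = splitMetric n) :
    0 ≤ (1 + M).det * M.toBlocks₂₂.det := by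
  obtain ⟨A, B, C, D, rfl⟩ : ∃ A B C D, M = fromBlocks A B C D :=
    ⟨_, _, _, _, (fromBlocks_toBlocks M).symm⟩
  simp only [splitMetric, fromBlocks_transpose, fromBlocks_multiply, fromBlocks_inj, mul_one,
    mul_zero, add_zero, zero_add, mul_neg, neg_mul] at hM
  obtain ⟨h₁₁, h₁₂, h₂₁, h₂₂⟩ := hM
  have hgram : (fromBlocks A B 0 1)ᵀ * fromBlocks A B 0 1 =
      (fromBlocks 1 0 C D)ᵀ * fromBlocks 1 0 C D := by
    simp only [fromBlocks_transpose, fromBlocks_multiply, fromBlocks_inj, transpose_zero,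
      transpose_one, mul_one, mul_zero, add_zero, zero_add]
    refine ⟨?_, ?_, ?_, ?_⟩
    · rw [← h₁₁]; abel
    · exact add_neg_eq_zero.mp h₁₂
    · exact add_neg_eq_zero.mp h₂₁
    · rw [← neg_neg (1 : Matrix (Fin n) (Fin n) ℝ), ← h₂₂]; abel
  have hsum : fromBlocks 1 0 C D + fromBlocks A B 0 1 = 1 + fromBlocks A B C D := by
    rw [← fromBlocks_one, fromBlocks_add, fromBlocks_add]
    simp [add_comm]
  simpa [hsum] using det_add_mul_det_nonneg_of_gram_eq hgram

theorem det_one_add_same_sign_of_same_component (n : ℕ) (hn : 0 < n)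
    (M N : Matrix (Fin n ⊕ Fin n) (Fin n ⊕ Fin n) ℝ)
    (hM : Mᵀ * splitMetric n * M = splitMetric n)
    (hN : Nᵀ * splitMetric n * N = splitMetric n)
    (hsame : (0 < M.toBlocks₁₁.det ∧ 0 < M.toBlocks₂₂.det ∧
        0 < N.toBlocks₁₁.det ∧ 0 < N.toBlocks₂₂.det) ∨
      (M.toBlocks₁₁.det < 0 ∧ M.toBlocks₂₂.det < 0 ∧
        N.toBlocks₁₁.det < 0 ∧ N.toBlocks₂₂.det < 0)) :
    0 ≤ (1 + M).det * (1 + N).det := by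
  have hM' := det_one_add_mul_det_toBlocks₂₂_nonneg hM
  have hN' := det_one_add_mul_det_toBlocks₂₂_nonneg hN
  rcases hsame with ⟨-, hMD, -, hND⟩ | ⟨-, hMD, -, hND⟩
  · exact mul_nonneg (nonneg_of_mul_nonneg_left hM' hMD) (nonneg_of_mul_nonneg_left hN' hND)
  · exact mul_nonneg_of_nonpos_of_nonpos (nonpos_of_mul_nonneg_left hM' hMD)
      (nonpos_of_mul_nonneg_left hN' hND)
end
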